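/- For every n ∈ ℤ one has the operator identity (1/2) L^{1/2}_{2n} = L¹_n + (1/4) h_n on F. (Equivalently, in terms of fields, (1/2):h^D(w)²: = (1/4):(∂_{−w}φ^D(−w))φ^D(−w): + (1/4):(∂_w φ^D(w))φ^D(w): − (1/(2w)) h^D(w), i.e. the Virasoro field L̃¹(z²) built from half the modes of L^{1/2} equals the member L^{1/2,−1/4}(z²) of the two-parameter family.) -/

import Mathlib

noncomputable section

/-- The neutral fermion Fock space `F = F^{⊗1/2}`: the complex vector space with
basis `{e_S : S a finite subset of ℕ}`. -/
abbrev FockD : Type := Finset ℕ →₀ ℂ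

/-- Basis vector `e_S`. -/
def eD (S : Finset ℕ) : FockD := Finsupp.single S 1

/-- Action of the fermion mode `a_m` on the basis vector `e_S`. -/
def aVec (m : ℤ) (S : Finset ℕ) : FockD :=
  if 0 ≤ m then
    if m.toNat ∈ S then 0
    else ((-1 : ℂ) ^ (S.filter (fun s => m.toNat < s)).card) • eD (insert m.toNat S)
  else
    if (-m - 1).toNat ∈ S then
      ((-1 : ℂ) ^ (S.filter (fun s => (-m - 1).toNat < s)).card) • eD (S.erase ((-m - 1).toNat))
    else 0

/-- The fermion mode `a_m` as a linear operator on `F`. -/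
def aOp (m : ℤ) : FockD →ₗ[ℂ] FockD :=
  Finsupp.lsum ℂ fun S => LinearMap.toSpanSingleton ℂ FockD (aVec m S)

/-- Fermionic normal ordered product `:a_i a_j:`. -/
def NO (i j : ℤ) : FockD →ₗ[ℂ] FockD :=
  if 0 ≤ i then (aOp i).comp (aOp j) else -((aOp j).comp (aOp i))

/-- Heisenberg operator `h_n = (1/2) ∑_{i∈ℤ} (−1)^{i+1} :a_i a_{−2n−1−i}:`
(on each vector only finitely many summands are nonzero). -/
def hD (n : ℤ) (x : FockD) : FockD :=
  (1 / 2 : ℂ) • ∑ᶠ i : ℤ, ((-1 : ℂ) ^ (i + 1)) • NO i (-2 * n - 1 - i) x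

/-- Virasoro operator `L^{1/2}_m = (1/2) ∑_{i∈ℤ} i · :a_i a_{−m−i−1}:`. -/
def LhalfD (m : ℤ) (x : FockD) : FockD :=
  (1 / 2 : ℂ) • ∑ᶠ i : ℤ, (i : ℂ) • NO i (-m - i - 1) x

/-- 2-point Virasoro operator `L¹_n = (1/2) ∑_{j∈ℤ} :h_j h_{n−j}:`, where the bosonic
normal ordered product is `:h_j h_k: = h_j h_k` if `j ≤ k` and `h_k h_j` otherwise. -/
def L1D (n : ℤ) (x : FockD) : FockD :=
  (1 / 2 : ℂ) • ∑ᶠ j : ℤ, if j ≤ n - j then hD j (hD (n - j) x) else hD (n - j) (hD j x)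

/-- Charge `c(S) = #{s ∈ S : s odd} − #{s ∈ S : s even}`. -/
def chg (S : Finset ℕ) : ℤ :=
  ((S.filter fun s => Odd s).card : ℤ) - ((S.filter fun s => Even s).card : ℤ)

/-- Charge-`n` component `F_{(n)}`: the span of the `e_S` with `c(S) = n`. -/
def FockComp (n : ℤ) : Submodule ℂ FockD :=
  Submodule.span ℂ {x : FockD | ∃ S : Finset ℕ, chg S = n ∧ x = eD S}

/-- Index set of the vacuum-like vector `v_n`. -/
def vSet (n : ℤ) : Finset ℕ :=
  if 0 ≤ n then (Finset.range n.toNat).image fun i => 2 * i + 1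
  else (Finset.range (-n).toNat).image fun i => 2 * i

/-- Vacuum-like vector `v_n` (`v_0 = e_∅`, `v_n = e_{{1,3,…,2n−1}}`,
`v_{−n} = e_{{0,2,…,2n−2}}` for `n > 0`). -/
def vD (n : ℤ) : FockD := eD (vSet n)

theorem aOp_eD (m : ℤ) (S : Finset ℕ) : aOp m (eD S) = aVec m S := by
  simp [aOp, eD]

theorem end_ext {A B : Module.End ℂ FockD} (h : ∀ S, A (eD S) = B (eD S)) : A = B := by
  refine Finsupp.lhom_ext fun S c => ?_
  have := congrArg (fun v => c • v) (h S)
  simp only [← map_smul] at this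
  simpa [eD] using this

theorem aOp_nat (t : ℕ) (S : Finset ℕ) : aOp (t : ℤ) (eD S) =
    if t ∈ S then 0 else ((-1 : ℂ) ^ (S.filter (fun s => t < s)).card) • eD (insert t S) := by
  simp [aOp_eD, aVec]

theorem aOp_neg (t : ℕ) (S : Finset ℕ) : aOp (-(t : ℤ) - 1) (eD S) =
    if t ∈ S then ((-1 : ℂ) ^ (S.filter (fun s => t < s)).card) • eD (S.erase t) else 0 := by
  have h1 : ¬ (0 ≤ -(t : ℤ) - 1) := by omega
  have h2 : (-(-(t : ℤ) - 1) - 1).toNat = t := by omega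
  simp only [aOp_eD, aVec, h1, h2, if_false]

theorem sgn_insert (k t : ℕ) (S : Finset ℕ) (h : t ∉ S) :
    (-1 : ℂ) ^ ((insert t S).filter (fun s => k < s)).card =
      (if k < t then -1 else 1) * (-1 : ℂ) ^ (S.filter (fun s => k < s)).card := by
  rw [Finset.filter_insert]
  split_ifs with hk
  · rw [Finset.card_insert_of_notMem (by simp [h]), pow_succ]; ring
  · simp

theorem sgn_erase (k t : ℕ) (S : Finset ℕ) (h : t ∈ S) :
    (-1 : ℂ) ^ ((S.erase t).filter (fun s => k < s)).card =
      (if k < t then -1 else 1) * (-1 : ℂ) ^ (S.filter (fun s => k < s)).card := by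
  have := sgn_insert k t (S.erase t) (by simp)
  rw [Finset.insert_erase h] at this
  rw [this]
  split_ifs <;> ring

theorem sgn_sq (n : ℕ) : (-1 : ℂ) ^ n * (-1 : ℂ) ^ n = 1 := by
  rw [← mul_pow]; simp

theorem car_cc (s t : ℕ) : aOp (s : ℤ) * aOp (t : ℤ) + aOp (t : ℤ) * aOp (s : ℤ) = 0 := by
  apply end_ext
  intro S
  simp only [LinearMap.add_apply, Module.End.mul_apply, aOp_nat, LinearMap.zero_apply]
  by_cases hst : s = t
  · subst hst
    by_cases hs : s ∈ S <;> simp [hs, aOp_nat]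
  · have hts : ¬ t = s := fun h => hst h.symm
    by_cases hs : s ∈ S <;> by_cases ht : t ∈ S <;>
      simp [hs, ht, aOp_nat, hst, hts]
    rw [sgn_insert _ _ _ hs, sgn_insert _ _ _ ht, Finset.insert_comm s t, smul_smul, smul_smul,
      ← add_smul]
    convert zero_smul ℂ _
    rcases lt_or_gt_of_ne hst with h | h <;> simp [h, not_lt.2 h.le] <;> ring

theorem car_dd (s t : ℕ) : aOp (-(s : ℤ) - 1) * aOp (-(t : ℤ) - 1) +
    aOp (-(t : ℤ) - 1) * aOp (-(s : ℤ) - 1) = 0 := by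
  apply end_ext
  intro S
  simp only [LinearMap.add_apply, Module.End.mul_apply, aOp_neg, LinearMap.zero_apply]
  by_cases hst : s = t
  · subst hst
    by_cases hs : s ∈ S <;> simp [hs, aOp_neg]
  · have hts : ¬ t = s := fun h => hst h.symm
    by_cases hs : s ∈ S <;> by_cases ht : t ∈ S <;>
      simp [hs, ht, aOp_neg, hst, hts]
    rw [sgn_erase _ _ _ hs, sgn_erase _ _ _ ht, Finset.erase_right_comm, smul_smul, smul_smul,
      ← add_smul]
    convert zero_smul ℂ _
    rcases lt_or_gt_of_ne hst with h | h <;> simp [h, not_lt.2 h.le] <;> ring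

theorem car_cd (s t : ℕ) : aOp (s : ℤ) * aOp (-(t : ℤ) - 1) +
    aOp (-(t : ℤ) - 1) * aOp (s : ℤ) = if s = t then 1 else 0 := by
  apply end_ext
  intro S
  simp only [LinearMap.add_apply, Module.End.mul_apply, aOp_neg, aOp_nat]
  by_cases hst : s = t
  · subst hst
    by_cases hs : s ∈ S
    · simp [hs, aOp_nat, sgn_erase, smul_smul, sgn_sq, Finset.insert_erase]
    · simp [hs, aOp_neg, sgn_insert, smul_smul, sgn_sq]
  · have hts : ¬ t = s := fun h => hst h.symm
    by_cases hs : s ∈ S <;> by_cases ht : t ∈ S <;>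
      simp [hs, ht, aOp_neg, aOp_nat, hst, hts]
    rw [sgn_erase _ _ _ ht, sgn_insert _ _ _ hs, Finset.erase_insert_of_ne hst, smul_smul, smul_smul,
      ← add_smul]
    convert zero_smul ℂ _
    rcases lt_or_gt_of_ne hst with h | h <;> simp [h, not_lt.2 h.le] <;> ring

theorem car (m n : ℤ) : aOp m * aOp n + aOp n * aOp m = if m + n = -1 then 1 else 0 := by
  have key : ∀ m : ℤ, (∃ t : ℕ, m = t) ∨ (∃ t : ℕ, m = -(t : ℤ) - 1) := by
    intro m
    by_cases h : 0 ≤ m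
    · exact Or.inl ⟨m.toNat, by omega⟩
    · exact Or.inr ⟨(-m - 1).toNat, by omega⟩
  rcases key m with ⟨s, rfl⟩ | ⟨s, rfl⟩ <;> rcases key n with ⟨t, rfl⟩ | ⟨t, rfl⟩
  · rw [car_cc, if_neg (by omega)]
  · rw [car_cd]; exact if_congr (by omega) rfl rfl
  · rw [add_comm, car_cd]; exact if_congr (by omega) rfl rfl
  · rw [car_dd, if_neg (by omega)]

theorem aOp_vac (m : ℤ) (h : m < 0) : aOp m (eD ∅) = 0 := by
  simp [aOp_eD, aVec, not_le.2 h]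

/-- The coefficient of the vacuum. -/
theorem vac_aOp (m : ℤ) (h : 0 ≤ m) (x : FockD) : (aOp m x) ∅ = 0 := by
  have : (Finsupp.lapply (R := ℂ) (∅ : Finset ℕ)) ∘ₗ aOp m = 0 := by
    refine Finsupp.lhom_ext' fun S => ?_
    ext
    have := aOp_eD m S
    simp only [eD] at this
    simp only [LinearMap.comp_apply, Finsupp.lsingle_apply, this, aVec, h, if_true]
    split_ifs <;> simp [eD]
  exact LinearMap.congr_fun this x

theorem coef_aOp (t : ℕ) (R : Finset ℕ) (ht : t ∉ R) (x : FockD) :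
    (aOp (-(t : ℤ) - 1) x) R = (-1 : ℂ) ^ (R.filter (fun s => t < s)).card * x (insert t R) := by
  have : (Finsupp.lapply (R := ℂ) R) ∘ₗ aOp (-(t : ℤ) - 1) =
      (-1 : ℂ) ^ (R.filter (fun s => t < s)).card • Finsupp.lapply (R := ℂ) (insert t R) := by
    refine Finsupp.lhom_ext' fun S => ?_
    ext
    have := aOp_neg t S
    simp only [eD] at this
    simp only [LinearMap.comp_apply, Finsupp.lsingle_apply, this]
    by_cases hS : S = insert t R
    · subst hS
      simp [sgn_insert, ht]
    · have h1 : t ∈ S → S.erase t ≠ R := by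
        intro h h2
        apply hS
        rw [← h2, Finset.insert_erase h]
      by_cases h : t ∈ S
      · simp [h, h1 h, hS]
      · simp [h, hS]
  exact LinearMap.congr_fun this x

theorem zero_of_comm (X : Module.End ℂ FockD) (σ : ℂ) (hσ : σ ≠ 0)
    (hX : ∀ m, X * aOp m = σ • (aOp m * X)) (h0 : (X (eD ∅)) ∅ = 0) : X = 0 := by
  have hv : X (eD ∅) = 0 := by
    ext S
    rcases S.eq_empty_or_nonempty with rfl | ⟨t, ht⟩
    · simpa using h0
    · have h1 := LinearMap.congr_fun (hX (-(t : ℤ) - 1)) (eD ∅)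
      simp only [Module.End.mul_apply, LinearMap.smul_apply, aOp_vac (-(t : ℤ) - 1) (by omega),
        map_zero] at h1
      have h2 := (smul_eq_zero.1 h1.symm).resolve_left hσ
      have h3 := coef_aOp t (S.erase t) (by simp) (X (eD ∅))
      rw [h2, Finset.insert_erase ht] at h3
      simpa using h3.symm
  apply end_ext
  intro S
  induction S using Finset.induction_on_max with
  | empty => simpa using hv
  | insert t S hS ih =>
    have ht : t ∉ S := fun h => lt_irrefl _ (hS t h)
    have h1 := aOp_nat t S
    have h2 : S.filter (fun s => t < s) = ∅ := by
      ext s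
      simp only [Finset.mem_filter, Finset.notMem_empty, iff_false, not_and, not_lt]
      exact fun h => (hS s h).le
    simp only [ht, h2, if_false, Finset.card_empty, pow_zero, one_smul] at h1
    rw [← h1, ← Module.End.mul_apply, hX]
    simp [ih]


/-- The endomorphism ring of the Fock space, sealed. -/
def V : Type := Module.End ℂ FockD

instance : Ring V := inferInstanceAs (Ring (Module.End ℂ FockD))

instance : Algebra ℂ V := inferInstanceAs (Algebra ℂ (Module.End ℂ FockD))

/-- The linear map underlying an element of `V`. -/
def V.lin (A : V) : FockD →ₗ[ℂ] FockD := A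

/-- The element of `V` given by a linear map. -/
def V.of (A : FockD →ₗ[ℂ] FockD) : V := A

instance : CoeFun V (fun _ => FockD → FockD) := ⟨fun A => ⇑A.lin⟩

theorem V.add_apply (A B : V) (x : FockD) : (A + B) x = A x + B x := rfl

theorem V.neg_apply (A : V) (x : FockD) : (-A) x = - A x := rfl

theorem V.zero_apply (x : FockD) : (0 : V) x = 0 := rfl

theorem V.mul_apply (A B : V) (x : FockD) : (A * B) x = A (B x) := rfl

theorem V.smul_apply (c : ℂ) (A : V) (x : FockD) : (c • A) x = c • A x := rfl

theorem V.ext' {A B : V} (h : ∀ x : FockD, A x = B x) : A = B := LinearMap.ext h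


/-- The fermion mode as an element of the endomorphism ring. -/
def aE (m : ℤ) : V := aOp m

/-- The normal ordered product as an element of the endomorphism ring. -/
def NE (i j : ℤ) : V := if 0 ≤ i then aE i * aE j else -(aE j * aE i)

theorem NE_eq (i j : ℤ) (x : FockD) : NE i j x = NO i j x := by
  unfold NE NO aE
  split_ifs <;> rfl

theorem carE (m n : ℤ) : aE m * aE n + aE n * aE m = if m + n = -1 then 1 else 0 := by
  refine Eq.trans (car m n) ?_
  split_ifs <;> rfl

theorem carE_anti (m n : ℤ) (h : m + n ≠ -1) : aE m * aE n = - (aE n * aE m) := by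
  have := carE m n
  rw [if_neg h] at this
  exact eq_neg_of_add_eq_zero_left this

theorem NE_symm (i j : ℤ) : NE i j = - NE j i := by
  unfold NE
  by_cases hi : 0 ≤ i <;> by_cases hj : 0 ≤ j <;> simp only [hi, hj, if_true, if_false]
  · exact carE_anti _ _ (by omega)
  · simp
  · rw [neg_neg]; rw [carE_anti i j (by omega)]

theorem NE_comm (i j m : ℤ) : NE i j * aE m - aE m * NE i j =
    (if j + m = -1 then aE i else 0) - (if i + m = -1 then aE j else 0) := by
  have h1 := carE j m
  have h2 := carE i m
  have e1 : (if j + m = -1 then aE i else 0) = aE i * (aE j * aE m + aE m * aE j) := by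
    rw [h1]; split_ifs <;> simp
  have e1' : (if j + m = -1 then aE i else 0) = (aE j * aE m + aE m * aE j) * aE i := by
    rw [h1]; split_ifs <;> simp
  have e2 : (if i + m = -1 then aE j else 0) = (aE i * aE m + aE m * aE i) * aE j := by
    rw [h2]; split_ifs <;> simp
  have e2' : (if i + m = -1 then aE j else 0) = aE j * (aE i * aE m + aE m * aE i) := by
    rw [h2]; split_ifs <;> simp
  unfold NE
  by_cases hi : 0 ≤ i
  · rw [if_pos hi, e1, e2]; noncomm_ring
  · rw [if_neg hi, e1', e2']; noncomm_ring

/-- Locally finite families. -/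
def LF (T : ℤ → V) : Prop := ∀ x, (Function.support fun i => T i x).Finite

open Classical in
/-- The sum of a locally finite family. -/
def lsum (T : ℤ → V) : V :=
  if h : LF T then
    V.of
    { toFun := fun x => ∑ᶠ i, T i x
      map_add' := fun x y => by
        simp only [map_add]
        exact finsum_add_distrib (h x) (h y)
      map_smul' := fun c x => by
        simp only [map_smul, RingHom.id_apply]
        exact (smul_finsum' c (h x)).symm }
  else 0

theorem lsum_apply {T : ℤ → V} (h : LF T) (x : FockD) :
    lsum T x = ∑ᶠ i, T i x := by
  rw [lsum, dif_pos h]; rfl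

theorem LF.add {T U : ℤ → V} (hT : LF T) (hU : LF U) :
    LF (fun i => T i + U i) := fun x =>
  ((hT x).union (hU x)).subset (Function.support_add _ _)

theorem LF.mul_left {T : ℤ → V} (hT : LF T) (A : V) :
    LF (fun i => A * T i) := fun x =>
  (hT x).subset (by
    intro i hi h
    apply hi
    simp only at h
    simp [V.mul_apply, V.smul_apply, h])

theorem LF.mul_right {T : ℤ → V} (hT : LF T) (A : V) :
    LF (fun i => T i * A) := fun x => hT (A x)

theorem LF.smul {T : ℤ → V} (hT : LF T) (c : ℤ → ℂ) :
    LF (fun i => c i • T i) := fun x =>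
  (hT x).subset (by
    intro i hi h
    apply hi
    simp only at h
    simp [V.mul_apply, V.smul_apply, h])

theorem LF.comp {T : ℤ → V} (hT : LF T) {g : ℤ → ℤ} (hg : Function.Injective g) :
    LF (fun i => T (g i)) := fun x => (hT x).preimage hg.injOn

theorem LF_single (k : ℤ) (A : V) : LF (fun i => if i = k then A else 0) :=
  fun x => (Set.finite_singleton k).subset (by
    intro i hi
    by_contra h
    apply hi
    have : i ≠ k := h
    simp [this, V.zero_apply])

theorem lsum_add {T U : ℤ → V} (hT : LF T) (hU : LF U) :
    lsum (fun i => T i + U i) = lsum T + lsum U := by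
  refine V.ext' fun x => ?_
  rw [V.add_apply, lsum_apply hT, lsum_apply hU, lsum_apply (hT.add hU)]
  exact finsum_add_distrib (hT x) (hU x)

theorem lsum_mul_left {T : ℤ → V} (hT : LF T) (A : V) :
    lsum (fun i => A * T i) = A * lsum T := by
  refine V.ext' fun x => ?_
  rw [V.mul_apply, lsum_apply hT, lsum_apply (hT.mul_left A)]
  exact (A.lin.toAddMonoidHom.map_finsum (hT x)).symm

theorem lsum_mul_right {T : ℤ → V} (hT : LF T) (A : V) :
    lsum (fun i => T i * A) = lsum T * A := by
  refine V.ext' fun x => ?_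
  rw [V.mul_apply, lsum_apply hT, lsum_apply (hT.mul_right A)]
  rfl

theorem lsum_smul {T : ℤ → V} (hT : LF T) (c : ℂ) :
    lsum (fun i => c • T i) = c • lsum T := by
  have := lsum_mul_left hT (c • 1)
  simpa using this

theorem lsum_comp {T : ℤ → V} (hT : LF T) (e : ℤ ≃ ℤ) :
    lsum (fun i => T (e i)) = lsum T := by
  refine V.ext' fun x => ?_
  rw [lsum_apply hT, lsum_apply (hT.comp e.injective)]
  exact finsum_comp_equiv e (f := fun i => T i x)

theorem lsum_single (k : ℤ) (A : V) :
    lsum (fun i => if i = k then A else 0) = A := by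
  refine V.ext' fun x => ?_
  rw [lsum_apply (LF_single k A), finsum_eq_single _ k]
  · simp
  · intro i hi; simp [hi, V.zero_apply]

theorem lsum_comm {T : ℤ → V} (hT : LF T) (A : V) :
    lsum T * A - A * lsum T = lsum (fun i => T i * A - A * T i) := by
  have h := lsum_add (hT.mul_right A) ((hT.mul_left A).smul (fun _ => -1))
  rw [lsum_smul (hT.mul_left A), lsum_mul_left hT, lsum_mul_right hT] at h
  simp only [neg_smul, one_smul, ← sub_eq_add_neg] at h
  exact h.symm

theorem lsum_anti {T : ℤ → V} (hT : LF T) (A : V) :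
    lsum T * A + A * lsum T = lsum (fun i => T i * A + A * T i) := by
  rw [lsum_add (hT.mul_right A) (hT.mul_left A), lsum_mul_left hT, lsum_mul_right hT]

theorem lsum_vac {T : ℤ → V} (hT : LF T) (h : ∀ i, (T i (eD ∅)) ∅ = 0) :
    (lsum T (eD ∅)) ∅ = 0 := by
  rw [lsum_apply hT]
  have := (Finsupp.lapply (R := ℂ) (M := ℂ) (∅ : Finset ℕ)).toAddMonoidHom.map_finsum (hT (eD ∅))
  simp only [LinearMap.toAddMonoidHom_coe, Finsupp.lapply_apply, h, finsum_zero] at this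
  exact this

theorem lsum_vac' {T : ℤ → V} (hT : LF T) (x : FockD) (h : ∀ i, (T i x) ∅ = 0) :
    (lsum T x) ∅ = 0 := by
  rw [lsum_apply hT]
  have := (Finsupp.lapply (R := ℂ) (M := ℂ) (∅ : Finset ℕ)).toAddMonoidHom.map_finsum (hT x)
  simp only [LinearMap.toAddMonoidHom_coe, Finsupp.lapply_apply, h, finsum_zero] at this
  exact this

theorem lsum_zero' {T : ℤ → V} (hT : LF T) (x : FockD) (h : ∀ i, T i x = 0) :
    lsum T x = 0 := by
  rw [lsum_apply hT]
  simp [h]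

theorem aE_bound (x : FockD) : ∃ N : ℕ, ∀ m : ℤ, m < -(N : ℤ) → aE m x = 0 := by
  refine ⟨x.support.sup (fun S => S.sup id) + 1, fun m hm => ?_⟩
  change aOp m x = 0
  unfold aOp
  rw [Finsupp.lsum_apply, Finsupp.sum]
  apply Finset.sum_eq_zero
  intro S hS
  have h1 : ¬ 0 ≤ m := by omega
  have h2 : (-m - 1).toNat ∉ S := by
    intro h
    have h3 : (-m - 1).toNat ≤ S.sup id := Finset.le_sup (f := id) h
    have h4 : S.sup id ≤ x.support.sup (fun S => S.sup id) :=
      Finset.le_sup (f := fun S : Finset ℕ => S.sup id) hS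
    omega
  have h3 : aVec m S = 0 := by rw [aVec, if_neg h1, if_neg h2]
  simp [h3]

theorem NE_zero {x : FockD} {N : ℕ} (hN : ∀ m : ℤ, m < -(N : ℤ) → aE m x = 0) (i j : ℤ)
    (h : (0 ≤ i ∧ j < -(N : ℤ)) ∨ i < -(N : ℤ) ∨ i + j < - 2 * (N : ℤ)) : NE i j x = 0 := by
  by_cases hi : i < -(N : ℤ)
  · rw [NE, if_neg (by omega)]
    simp [V.neg_apply, V.mul_apply, hN i hi]
  · have hj : j < -(N : ℤ) := by omega
    rw [NE_symm, NE, if_neg (by omega)]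
    simp [V.neg_apply, V.mul_apply, hN j hj]

theorem NE_vac (i j : ℤ) : (NE i j (eD ∅)) ∅ = 0 := by
  unfold NE
  split_ifs with h
  · exact vac_aOp i h _
  · have := aOp_vac i (by omega)
    have h2 : aE i (eD ∅) = 0 := this
    simp [V.neg_apply, V.mul_apply, h2]

theorem LF_NE (g : ℤ → ℂ) (c : ℤ) : LF (fun i => g i • NE i (c - i)) := by
  refine LF.smul (T := fun i => NE i (c - i)) ?_ g
  intro x
  obtain ⟨N, hN⟩ := aE_bound x
  refine (Set.finite_Icc (-(N : ℤ)) (|c| + N)).subset ?_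
  intro i hi
  by_contra hc
  apply hi
  apply NE_zero hN
  simp only [Set.mem_Icc, not_and_or, not_le] at hc
  have := le_abs_self c
  have := abs_nonneg c
  omega

/-- Quadratic operators. -/
def QE (g : ℤ → ℂ) (c : ℤ) : V := lsum (fun i => g i • NE i (c - i))

theorem QE_comm (g : ℤ → ℂ) (c m : ℤ) : QE g c * aE m - aE m * QE g c =
    (g (c + m + 1) - g (-1 - m)) • aE (c + m + 1) := by
  rw [QE, lsum_comm (LF_NE g c), sub_smul, sub_eq_add_neg, ← neg_smul]
  conv_rhs => rw [← lsum_single (c + m + 1) (g (c + m + 1) • aE (c + m + 1)),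
    ← lsum_single (-1 - m) (-g (-1 - m) • aE (c + m + 1))]
  rw [← lsum_add (LF_single _ _) (LF_single _ _)]
  congr 1
  funext i
  have := NE_comm i (c - i) m
  rw [smul_mul_assoc, mul_smul_comm, ← smul_sub, this, smul_sub, sub_eq_add_neg]
  congr 1
  · by_cases h : i = c + m + 1
    · rw [if_pos h, if_pos (by omega), h]
    · rw [if_neg h, if_neg (by omega), smul_zero]
  · by_cases h : i = -1 - m
    · rw [if_pos h, if_pos (by omega), h, neg_smul]
      congr 3
      omega
    · rw [if_neg h, if_neg (by omega), smul_zero, neg_zero]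

/-- The sign `(-1)^(i+1)`. -/
def eps (i : ℤ) : ℂ := (-1 : ℂ) ^ (i + 1)

theorem eps_even {i : ℤ} (h : i % 2 = 0) : eps i = -1 := by
  unfold eps
  exact Odd.neg_one_zpow (by rw [Int.odd_iff]; omega)

theorem eps_odd {i : ℤ} (h : i % 2 = 1) : eps i = 1 := by
  unfold eps
  exact Even.neg_one_zpow (by rw [Int.even_iff]; omega)

theorem eps_congr {i j : ℤ} (h : i % 2 = j % 2) : eps i = eps j := by
  rcases Int.emod_two_eq_zero_or_one j with hj | hj
  · rw [eps_even hj, eps_even (h.trans hj)]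
  · rw [eps_odd hj, eps_odd (h.trans hj)]

theorem eps_opp {i j : ℤ} (h : i % 2 ≠ j % 2) : eps i = - eps j := by
  rcases Int.emod_two_eq_zero_or_one j with hj | hj
  · rw [eps_even hj, eps_odd (by omega)]; simp
  · rw [eps_odd hj, eps_even (by omega)]

theorem eps_sq (i : ℤ) : eps i * eps i = 1 := by
  rcases Int.emod_two_eq_zero_or_one i with hj | hj
  · rw [eps_even hj]; simp
  · rw [eps_odd hj]; simp

/-- The Heisenberg operator as a linear map. -/
def hE (n : ℤ) : V := (1 / 2 : ℂ) • QE eps (-2 * n - 1)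

theorem hE_apply (n : ℤ) (x : FockD) : hE n x = hD n x := by
  rw [hE, hD, V.smul_apply, QE, lsum_apply (LF_NE _ _)]
  simp only [V.smul_apply, NE_eq, eps]

theorem hE_comm (n m : ℤ) : hE n * aE m - aE m * hE n = eps m • aE (m - 2 * n) := by
  rw [hE, smul_mul_assoc, mul_smul_comm, ← smul_sub, QE_comm, smul_smul]
  have e : -2 * n - 1 + m + 1 = m - 2 * n := by ring
  rw [e, eps_congr (show (m - 2 * n) % 2 = m % 2 by omega),
    eps_opp (show (-1 - m) % 2 ≠ m % 2 by omega)]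
  congr 1
  ring

theorem hE_zero {x : FockD} {N : ℕ} (hN : ∀ m : ℤ, m < -(N : ℤ) → aE m x = 0) (n : ℤ)
    (h : (N : ℤ) ≤ n) : hE n x = 0 := by
  rw [hE, V.smul_apply, QE, lsum_zero' (LF_NE _ _), smul_zero]
  intro i
  rw [V.smul_apply, NE_zero hN, smul_zero]
  omega

theorem hE_vac0 (n : ℤ) (h : 0 ≤ n) : hE n (eD ∅) = 0 := by
  refine hE_zero (N := 0) (fun m hm => aOp_vac m (by simpa using hm)) n (by simpa using h)

theorem vac0_hE (n : ℤ) (h : n < 0) (x : FockD) : (hE n x) ∅ = 0 := by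
  rw [hE, V.smul_apply, Finsupp.smul_apply, QE, lsum_vac' (LF_NE _ _), smul_zero]
  intro i
  rw [V.smul_apply, Finsupp.smul_apply]
  convert smul_zero _
  by_cases hi : 0 ≤ i
  · rw [NE, if_pos hi]; exact vac_aOp i hi _
  · rw [NE_symm, NE, if_pos (by omega)]
    have := vac_aOp (-2 * n - 1 - i) (by omega) (aE i x)
    rw [V.neg_apply, Finsupp.neg_apply, V.mul_apply]
    exact neg_eq_zero.2 this

theorem hE_vac (n : ℤ) : (hE n (eD ∅)) ∅ = 0 := by
  by_cases h : 0 ≤ n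
  · rw [hE_vac0 n h]; rfl
  · exact vac0_hE n (by omega) _


theorem zeroV (X : V) (σ : ℂ) (hσ : σ ≠ 0)
    (hX : ∀ m, X * aE m = σ • (aE m * X)) (h0 : (X (eD ∅)) ∅ = 0) : X = 0 :=
  zero_of_comm X σ hσ hX h0

/-- The terms of the ordered product of the Heisenberg and the fermion field. -/
def WE (q p : ℤ) : V :=
  if q + 2 * p < 0 then hE p * aE (q + 2 * p) else aE (q + 2 * p) * hE p

theorem LF_WE (q : ℤ) : LF (WE q) := by
  intro x
  obtain ⟨N, hN⟩ := aE_bound x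
  refine (Set.finite_Icc (-(N : ℤ) - |q|) (N + |q|)).subset ?_
  intro p hp
  by_contra hc
  apply hp
  simp only [Set.mem_Icc, not_and_or, not_le] at hc
  have := le_abs_self q
  have := neg_abs_le q
  simp only [WE]
  rcases hc with hc | hc
  · rw [if_pos (by omega), V.mul_apply, hN _ (by omega), map_zero]
  · rw [if_neg (by omega), V.mul_apply, hE_zero hN _ (by omega), map_zero]

theorem WE_anti (q p r : ℤ) : WE q p * aE r + aE r * WE q p =
    (if p = (-1 - r - q) / 2 ∧ (q + r) % 2 = 1 then hE p else 0) +
      eps r • NE (q + 2 * p) (r - 2 * p) := by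
  have h1 := hE_comm p r
  have h2 := carE (q + 2 * p) r
  have e : (if p = (-1 - r - q) / 2 ∧ (q + r) % 2 = 1 then hE p else 0) =
      hE p * (aE (q + 2 * p) * aE r + aE r * aE (q + 2 * p)) := by
    rw [h2]
    by_cases h : q + 2 * p + r = -1
    · rw [if_pos h, if_pos (by omega), mul_one]
    · rw [if_neg h, if_neg (by omega), mul_zero]
  have e' : (if p = (-1 - r - q) / 2 ∧ (q + r) % 2 = 1 then hE p else 0) =
      (aE (q + 2 * p) * aE r + aE r * aE (q + 2 * p)) * hE p := by
    rw [h2]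
    by_cases h : q + 2 * p + r = -1
    · rw [if_pos h, if_pos (by omega), one_mul]
    · rw [if_neg h, if_neg (by omega), zero_mul]
  unfold WE NE
  by_cases hs : q + 2 * p < 0
  · rw [if_pos hs, if_neg (not_le.2 hs), e, smul_neg, ← smul_mul_assoc, ← h1]
    noncomm_ring
  · rw [if_neg hs, if_pos (not_lt.1 hs), e', ← mul_smul_comm, ← h1]
    noncomm_ring

theorem LF_NE2 (q r : ℤ) : LF (fun p => NE (q + 2 * p) (r - 2 * p)) := by
  have h := LF_NE (fun _ => 1) (q + r)
  have h2 := h.comp (g := fun p => q + 2 * p) (fun a b hab => by simpa using hab)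
  convert h2 using 2 with p
  rw [one_smul]
  congr 1
  ring

theorem QE_split (q r : ℤ) (h : (q + r) % 2 = 1) :
    QE eps (q + r) = (2 * eps q) • lsum (fun p => NE (q + 2 * p) (r - 2 * p)) := by
  refine V.ext' fun x => ?_
  rw [V.smul_apply, lsum_apply (LF_NE2 q r), QE, lsum_apply (LF_NE _ _)]
  set f : ℤ → FockD := fun i => (eps i • NE i (q + r - i)) x with hf
  have hfin : (Function.support f).Finite := LF_NE eps (q + r) x
  have g1 : Function.Injective (fun p : ℤ => q + 2 * p) := fun a b hab => by simpa using hab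
  have g2 : Function.Injective (fun p : ℤ => r - 2 * p) := fun a b hab => by simpa using hab
  have hu : Set.range (fun p : ℤ => q + 2 * p) ∪ Set.range (fun p : ℤ => r - 2 * p) = Set.univ := by
    ext i
    simp only [Set.mem_union, Set.mem_range, Set.mem_univ, iff_true]
    by_cases hi : (i - q) % 2 = 0
    · exact Or.inl ⟨(i - q) / 2, by omega⟩
    · exact Or.inr ⟨(r - i) / 2, by omega⟩
  have hd : Disjoint (Set.range (fun p : ℤ => q + 2 * p)) (Set.range (fun p : ℤ => r - 2 * p)) := by
    rw [Set.disjoint_left]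
    rintro _ ⟨a, rfl⟩ ⟨b, hb⟩
    simp only at hb
    omega
  have hs := finsum_mem_union' (f := f) hd (hfin.subset Set.inter_subset_right)
    (hfin.subset Set.inter_subset_right)
  rw [hu, finsum_mem_univ, finsum_mem_range g1, finsum_mem_range g2] at hs
  have hk : ∀ p, f (q + 2 * p) = eps q • NE (q + 2 * p) (r - 2 * p) x := by
    intro p
    rw [hf]
    simp only
    rw [V.smul_apply, eps_congr (show (q + 2 * p) % 2 = q % 2 by omega),
      show q + r - (q + 2 * p) = r - 2 * p by ring]
  have hk2 : ∀ p, f (r - 2 * p) = eps q • NE (q + 2 * p) (r - 2 * p) x := by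
    intro p
    rw [hf]
    simp only
    rw [V.smul_apply, eps_opp (show (r - 2 * p) % 2 ≠ q % 2 by omega), NE_symm, V.neg_apply,
      smul_neg, neg_smul, neg_neg, show q + r - (r - 2 * p) = q + 2 * p by ring]
  simp only [hk, hk2] at hs
  rw [hs, ← smul_finsum' _ (LF_NE2 q r x), ← add_smul, two_mul]

theorem WE_sum (q : ℤ) : lsum (WE q) = 0 := by
  refine zeroV _ (-1) (by simp) ?_ ?_
  · intro r
    rw [neg_smul, one_smul]
    apply eq_neg_of_add_eq_zero_left
    rw [lsum_anti (LF_WE q)]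
    simp only [WE_anti]
    have hL : LF (fun p => eps r • NE (q + 2 * p) (r - 2 * p)) := (LF_NE2 q r).smul (fun _ => eps r)
    by_cases h : (q + r) % 2 = 1
    · simp only [h, and_true]
      have e1 : (fun p => (if p = (-1 - r - q) / 2 then hE p else 0) +
          eps r • NE (q + 2 * p) (r - 2 * p)) =
          (fun p => (if p = (-1 - r - q) / 2 then hE ((-1 - r - q) / 2) else 0) +
          eps r • NE (q + 2 * p) (r - 2 * p)) := by
        funext p
        refine congrArg (· + _) ?_
        by_cases hp : p = (-1 - r - q) / 2
        · rw [if_pos hp, if_pos hp, ← hp]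
        · rw [if_neg hp, if_neg hp]
      rw [e1, lsum_add (LF_single _ _) hL, lsum_single, lsum_smul (LF_NE2 q r), hE]
      have e2 : -2 * ((-1 - r - q) / 2) - 1 = q + r := by omega
      rw [e2, QE_split q r h, eps_opp (show r % 2 ≠ q % 2 by omega), smul_smul, ← add_smul]
      convert zero_smul ℂ _
      ring
    · simp only [h, and_false, if_false, zero_add]
      have e1 := lsum_comp hL (Equiv.subLeft ((r - q) / 2))
      have e2 : (fun p => eps r • NE (q + 2 * (Equiv.subLeft ((r - q) / 2) p))
          (r - 2 * (Equiv.subLeft ((r - q) / 2) p))) =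
          fun p => (-1 : ℂ) • (eps r • NE (q + 2 * p) (r - 2 * p)) := by
        funext p
        rw [NE_symm, Equiv.subLeft_apply,
          show r - 2 * ((r - q) / 2 - p) = q + 2 * p by omega,
          show q + 2 * ((r - q) / 2 - p) = r - 2 * p by omega]
        simp
      simp only [e2] at e1
      rw [lsum_smul hL] at e1
      set X := lsum (fun p => eps r • NE (q + 2 * p) (r - 2 * p))
      have e3 : (2 : ℂ) • X = 0 := by
        rw [two_smul]
        nth_rewrite 1 [← e1]
        simp
      exact (smul_eq_zero.1 e3).resolve_left two_ne_zero
  · apply lsum_vac (LF_WE q)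
    intro p
    unfold WE
    split_ifs with h
    · have : aE (q + 2 * p) (eD ∅) = 0 := aOp_vac _ h
      rw [V.mul_apply, this, map_zero]; rfl
    · exact vac_aOp _ (not_lt.1 h) _

theorem kappa_fin (a b : ℤ) : (Function.support fun j : ℤ =>
    ((if a ≤ j then 1 else 0) - (if b < j then 1 else 0) : ℂ)).Finite := by
  refine (Set.finite_Icc (min a b) (max a b)).subset ?_
  intro j hj
  by_contra hc
  apply hj
  simp only [Set.mem_Icc, not_and_or, not_le, lt_min_iff, max_lt_iff] at hc
  beta_reduce
  rcases hc with hc | hc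
  · rw [if_neg (not_le.2 hc.1), if_neg (not_lt.2 hc.2.le), sub_zero]
  · rw [if_pos hc.1.le, if_pos hc.2, sub_self]

theorem kappa_sum (a b : ℤ) : ∑ᶠ j : ℤ,
    ((if a ≤ j then 1 else 0) - (if b < j then 1 else 0) : ℂ) = b - a + 1 := by
  by_cases h : a ≤ b
  · have e : (fun j : ℤ => ((if a ≤ j then 1 else 0) - (if b < j then 1 else 0) : ℂ)) =
        fun j => if j ∈ Finset.Icc a b then 1 else 0 := by
      funext j
      simp only [Finset.mem_Icc]
      by_cases h1 : a ≤ j <;> by_cases h2 : b < j <;> simp [h1, h2, not_le.2, not_lt.1] <;> omega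
    rw [e, finsum_eq_sum_of_support_subset (s := Finset.Icc a b)]
    · rw [Finset.sum_congr rfl (fun j hj => if_pos hj)]
      simp
      rw [← Int.cast_natCast, Int.toNat_of_nonneg (by omega)]
      push_cast; ring
    · intro j hj; by_contra h; apply hj; exact if_neg h
  · have e : (fun j : ℤ => ((if a ≤ j then 1 else 0) - (if b < j then 1 else 0) : ℂ)) =
        fun j => if j ∈ Finset.Ioo b a then -1 else 0 := by
      funext j
      simp only [Finset.mem_Ioo]
      by_cases h1 : a ≤ j <;> by_cases h2 : b < j <;> simp [h1, h2] <;> omega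
    rw [e, finsum_eq_sum_of_support_subset (s := Finset.Ioo b a)]
    · rw [Finset.sum_congr rfl (fun j hj => if_pos hj)]
      simp
      rw [← Int.cast_natCast, show (((a - b).toNat - 1 : ℕ) : ℤ) = a - b - 1 by omega]
      push_cast; ring
    · intro j hj; by_contra h; apply hj; exact if_neg h

/-- The terms of the 2-point Virasoro operator. -/
def SE (n j : ℤ) : V := if j ≤ n - j then hE j * hE (n - j) else hE (n - j) * hE j

theorem LF_SE (n : ℤ) : LF (SE n) := by
  intro x
  obtain ⟨N, hN⟩ := aE_bound x
  refine (Set.finite_Icc (-(N : ℤ) - |n|) (N + |n|)).subset ?_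
  intro p hp
  by_contra hc
  apply hp
  simp only [Set.mem_Icc, not_and_or, not_le] at hc
  have := le_abs_self n
  have := neg_abs_le n
  simp only [SE]
  rcases hc with hc | hc
  · rw [if_pos (by omega), V.mul_apply, hE_zero hN _ (by omega), map_zero]
  · rw [if_neg (by omega), V.mul_apply, hE_zero hN _ (by omega), map_zero]

theorem SE_vac (n j : ℤ) : (SE n j (eD ∅)) ∅ = 0 := by
  have key : ∀ j k : ℤ, j ≤ k → ((hE j * hE k) (eD ∅)) ∅ = 0 := by
    intro j k h
    rw [V.mul_apply]
    by_cases hj : j < 0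
    · exact vac0_hE j hj _
    · rw [hE_vac0 k (by omega), map_zero]; rfl
  unfold SE
  split_ifs with h
  · exact key _ _ h
  · exact key _ _ (by omega)

theorem hE_WE1 (q p : ℤ) : hE p * aE (q + 2 * p) =
    WE q p + (if 0 ≤ q + 2 * p then (1 : ℂ) else 0) • eps q • aE q := by
  have h := hE_comm p (q + 2 * p)
  rw [eps_congr (show (q + 2 * p) % 2 = q % 2 by omega), show q + 2 * p - 2 * p = q by ring] at h
  rw [← h]
  unfold WE
  by_cases hs : q + 2 * p < 0
  · rw [if_pos hs, if_neg (not_le.2 hs)]; simp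
  · rw [if_neg hs, if_pos (not_lt.1 hs)]; simp

theorem hE_WE2 (q p : ℤ) : aE (q + 2 * p) * hE p =
    WE q p + ((if 0 ≤ q + 2 * p then (1 : ℂ) else 0) - 1) • eps q • aE q := by
  have h := hE_comm p (q + 2 * p)
  rw [eps_congr (show (q + 2 * p) % 2 = q % 2 by omega), show q + 2 * p - 2 * p = q by ring] at h
  rw [← h]
  unfold WE
  by_cases hs : q + 2 * p < 0
  · rw [if_pos hs, if_neg (not_le.2 hs)]; simp
  · rw [if_neg hs, if_pos (not_lt.1 hs)]; simp

theorem hh_comm (q n j k : ℤ) (hn : n = j + k) :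
    hE j * hE k * aE (q + 2 * n) - aE (q + 2 * n) * (hE j * hE k) =
    eps q • (WE q j + WE q k) +
      ((if 0 ≤ q + 2 * j then (1 : ℂ) else 0) + (if 0 ≤ q + 2 * k then (1 : ℂ) else 0) - 1) •
        aE q := by
  have h1 := hE_comm k (q + 2 * n)
  have h2 := hE_comm j (q + 2 * n)
  rw [eps_congr (show (q + 2 * n) % 2 = q % 2 by omega)] at h1 h2
  rw [show q + 2 * n - 2 * k = q + 2 * j by rw [hn]; ring] at h1
  rw [show q + 2 * n - 2 * j = q + 2 * k by rw [hn]; ring] at h2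
  have e : hE j * hE k * aE (q + 2 * n) - aE (q + 2 * n) * (hE j * hE k) =
      hE j * (eps q • aE (q + 2 * j)) + (eps q • aE (q + 2 * k)) * hE k := by
    rw [← h1, ← h2]; noncomm_ring
  rw [e, mul_smul_comm, smul_mul_assoc, hE_WE1, hE_WE2]
  simp only [smul_add, smul_smul]
  rw [mul_left_comm, eps_sq, mul_left_comm, eps_sq, mul_one, mul_one, add_sub_assoc, add_smul]
  abel

theorem SE_comm (q n j : ℤ) : SE n j * aE (q + 2 * n) - aE (q + 2 * n) * SE n j =
    (eps q • WE q j + eps q • WE q (n - j)) +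
      ((if -(q / 2) ≤ j then 1 else 0) - (if n + q / 2 < j then 1 else 0) : ℂ) • aE q := by
  have e : ((if -(q / 2) ≤ j then 1 else 0) - (if n + q / 2 < j then 1 else 0) : ℂ) =
      (if 0 ≤ q + 2 * j then (1 : ℂ) else 0) + (if 0 ≤ q + 2 * (n - j) then (1 : ℂ) else 0) - 1 := by
    rw [add_sub_assoc, sub_eq_add_neg]
    congr 1
    · exact if_congr (by omega) rfl rfl
    · by_cases h : n + q / 2 < j
      · rw [if_pos h, if_neg (by omega)]; simp
      · rw [if_neg h, if_pos (by omega)]; simp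
  rw [e, ← smul_add]
  unfold SE
  by_cases h : j ≤ n - j
  · rw [if_pos h, hh_comm q n j (n - j) (by ring)]
  · rw [if_neg h, hh_comm q n (n - j) j (by ring), add_comm (WE q (n - j))]
    congr 2
    ring

theorem L1_comm (q n : ℤ) : lsum (SE n) * aE (q + 2 * n) - aE (q + 2 * n) * lsum (SE n) =
    ((n + q / 2 : ℤ) - (-(q / 2) : ℤ) + 1 : ℂ) • aE q := by
  rw [lsum_comm (LF_SE n)]
  simp only [SE_comm]
  have l1 : LF (fun j => eps q • WE q j) := (LF_WE q).smul (fun _ => eps q)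
  have l2 : LF (fun j => eps q • WE q (n - j)) := l1.comp (Equiv.subLeft n).injective
  have l3 : LF (fun j : ℤ => ((if -(q / 2) ≤ j then 1 else 0) -
      (if n + q / 2 < j then 1 else 0) : ℂ) • aE q) := by
    intro x
    refine (kappa_fin (-(q / 2)) (n + q / 2)).subset ?_
    intro j hj h
    apply hj
    simp only at h
    beta_reduce
    rw [h]
    simp [V.zero_apply]
  have s2 : lsum (fun j => eps q • WE q (n - j)) = lsum (fun j => eps q • WE q j) :=
    lsum_comp l1 (Equiv.subLeft n)
  rw [lsum_add (l1.add l2) l3, lsum_add l1 l2, s2, lsum_smul (LF_WE q), WE_sum, smul_zero,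
    add_zero, zero_add]
  refine V.ext' fun x => ?_
  rw [lsum_apply l3]
  simp only [V.smul_apply]
  rw [← finsum_smul, kappa_sum]

theorem main_op (n : ℤ) : (1 / 4 : ℂ) • QE (fun i => (i : ℂ)) (-2 * n - 1) =
    (1 / 2 : ℂ) • lsum (SE n) + (1 / 4 : ℂ) • hE n := by
  rw [← sub_eq_zero]
  refine zeroV _ 1 one_ne_zero ?_ ?_
  · intro m
    rw [one_smul, ← sub_eq_zero]
    obtain ⟨q, rfl⟩ : ∃ q, m = q + 2 * n := ⟨m - 2 * n, by ring⟩
    have h1 := QE_comm (fun i => (i : ℂ)) (-2 * n - 1) (q + 2 * n)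
    have h2 := L1_comm q n
    have h3 := hE_comm n (q + 2 * n)
    rw [show -2 * n - 1 + (q + 2 * n) + 1 = q by ring] at h1
    rw [show q + 2 * n - 2 * n = q by ring,
      eps_congr (show (q + 2 * n) % 2 = q % 2 by omega)] at h3
    have e : ∀ A B C D : V, ((1 / 4 : ℂ) • A - ((1 / 2 : ℂ) • B + (1 / 4 : ℂ) • C)) * D -
        D * ((1 / 4 : ℂ) • A - ((1 / 2 : ℂ) • B + (1 / 4 : ℂ) • C)) =
        (1 / 4 : ℂ) • (A * D - D * A) - ((1 / 2 : ℂ) • (B * D - D * B) +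
          (1 / 4 : ℂ) • (C * D - D * C)) := by
      intro A B C D
      simp only [sub_mul, mul_sub, add_mul, mul_add, smul_mul_assoc, mul_smul_comm, smul_sub]
      abel
    rw [e, h1, h2, h3]
    simp only [smul_smul]
    rw [← add_smul, ← sub_smul]
    convert zero_smul ℂ _
    rcases Int.emod_two_eq_zero_or_one q with hq | hq
    · obtain ⟨k, hk⟩ : ∃ k, q = 2 * k := ⟨q / 2, by omega⟩
      rw [eps_even hq, show q / 2 = k by omega, hk]
      push_cast
      ring
    · obtain ⟨k, hk⟩ : ∃ k, q = 2 * k + 1 := ⟨q / 2, by omega⟩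
      rw [eps_odd hq, show q / 2 = k by omega, hk]
      push_cast
      ring
  · have h1 : (QE (fun i => (i : ℂ)) (-2 * n - 1) (eD ∅)) ∅ = 0 := by
      apply lsum_vac (LF_NE _ _)
      intro i
      rw [V.smul_apply, Finsupp.smul_apply, NE_vac, smul_zero]
    have h2 : (lsum (SE n) (eD ∅)) ∅ = 0 := lsum_vac (LF_SE n) (SE_vac n)
    have h3 := hE_vac n
    generalize QE (fun i => (i : ℂ)) (-2 * n - 1) = A at *
    generalize lsum (SE n) = B at *
    generalize hE n = C at *
    rw [sub_eq_add_neg, V.add_apply, V.neg_apply, V.add_apply, V.smul_apply, V.smul_apply,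
      V.smul_apply]
    simp [h1, h2, h3]

/-- Operator identity `(1/2) L^{1/2}_{2n} = L¹_n + (1/4) h_n` on `F`: the Virasoro field
built from half the modes of `L^{1/2}` is the member `L^{1/2,−1/4}` of the two-parameter
family. -/
theorem half_modes_identity (n : ℤ) (x : FockD) :
    (1 / 2 : ℂ) • LhalfD (2 * n) x = L1D n x + (1 / 4 : ℂ) • hD n x := by
  have h := congrArg (fun A : V => A x) (main_op n)
  simp only [V.add_apply, V.smul_apply] at h
  rw [QE, lsum_apply (LF_NE _ _), lsum_apply (LF_SE n), hE_apply] at h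
  rw [LhalfD, L1D, smul_smul]
  have e1 : ∀ i : ℤ, ((i : ℂ) • NE i (-2 * n - 1 - i)) x = (i : ℂ) • NO i (-(2 * n) - i - 1) x := by
    intro i
    rw [V.smul_apply, NE_eq, show -2 * n - 1 - i = -(2 * n) - i - 1 by ring]
  have e2 : ∀ j : ℤ, SE n j x =
      if j ≤ n - j then hD j (hD (n - j) x) else hD (n - j) (hD j x) := by
    intro j
    unfold SE
    split_ifs <;> rw [V.mul_apply, hE_apply, hE_apply]
  simp only [e1, e2] at h
  rw [← h]
  norm_num
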